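/- arXiv:2206.09525 — 2 statements merged into one kernel-verified Lean document; each statement's English description precedes it below -/
import Mathlib

section
/- Let T ⊂ ℝ³ be a tetrahedron with affinely independent vertices v₀, v₁, v₂, v₃. Let r^v ≥ −1 be an integer, set r₂ = (r^v, −1, −1), and let k ≥ max(2r^v + 1, 1); set r₃ = r₂ ⊖ 1 = (max(r^v−1,−1), −1, −1). Assume S₃(T, r₃, k−1) is nonempty. Then {div u : u ∈ 𝔹_k^{div}(T; r₂)} = {p ∈ B_{k−1}(T; r₃) : ∫_T p dx = 0}, where 𝔹_k^{div}(T; r₂) = {u ∈ 𝔹_k³(T; r₂) : u·n = 0 on ∂T}. -/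
open scoped BigOperators
open MeasureTheory

/-- The interior lattice set `S₃(T, r, k)` for a smoothness vector `r = (rᵛ, rᵉ, r^f)`. -/
def interiorLattice (k : ℕ) (rv re rf : ℤ) : Set (Fin 4 → ℕ) :=
  {α | ∑ i, α i = k ∧ ∀ f : Finset (Fin 4), f.Nonempty → f ≠ Finset.univ →
    ((f.card = 1 → rv < ∑ i ∈ fᶜ, (α i : ℤ)) ∧
     (f.card = 2 → re < ∑ i ∈ fᶜ, (α i : ℤ)) ∧
     (f.card = 3 → rf < ∑ i ∈ fᶜ, (α i : ℤ)))}

/-- The Bernstein monomial `λ^α` on `ℝ³`. -/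
def bernBary3 (lam : Fin 4 → ((Fin 3 → ℝ) →ᵃ[ℝ] ℝ)) (α : Fin 4 → ℕ) :
    (Fin 3 → ℝ) → ℝ :=
  fun x => ∏ i, (lam i x) ^ (α i)

/-- The bubble space `B_k(T; r) = span{λ^α : α ∈ S₃(T, r, k)}`. -/
def bubbleSpace (lam : Fin 4 → ((Fin 3 → ℝ) →ᵃ[ℝ] ℝ)) (k : ℕ) (rv re rf : ℤ) :
    Submodule ℝ ((Fin 3 → ℝ) → ℝ) :=
  Submodule.span ℝ (bernBary3 lam '' interiorLattice k rv re rf)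

/-- The divergence `div u = ∂₁u₁ + ∂₂u₂ + ∂₃u₃` of a vector field on `ℝ³`. -/
noncomputable def diverg (u : (Fin 3 → ℝ) → (Fin 3 → ℝ)) : (Fin 3 → ℝ) → ℝ :=
  fun x => ∑ m, fderiv ℝ (fun y => u y m) x (Pi.single m 1)

/-- Vanishing of the normal trace `u ⋅ n = 0` on `∂T` for the tetrahedron with vertices
`v₀, …, v₃`: on each face (the convex hull of the three vertices `v_i`, `i ≠ j`), `u` is
orthogonal to every vector `w` normal to that face. -/
def normalTraceZero (v : Fin 4 → (Fin 3 → ℝ)) (u : (Fin 3 → ℝ) → (Fin 3 → ℝ)) : Prop :=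
  ∀ j : Fin 4, ∀ x ∈ convexHull ℝ (v '' {i | i ≠ j}), ∀ w : Fin 3 → ℝ,
    (∀ a, a ≠ j → ∀ b, b ≠ j → ∑ m, w m * (v a m - v b m) = 0) →
    ∑ m, w m * u x m = 0

/-!
Let `T` be a simplex with vertices `v_j`. A field with vanishing normal trace is
`u = ∑ j, F_j(λ) v_j` with `∑ j, F_j = 0` and `λ_j ∣ F_j`, and its divergence is `∑ j, ∂F_j/∂λ_j`.
The functional `Γ : λ^α ↦ α!` takes the same value on `F` and on `∂F/∂λ_j` when `λ_j ∣ F`, so it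
kills every such divergence. Conversely, if `α_i, α_j > 0`, then `λ^α (v_i - v_j)` has vanishing
normal trace and divergence `∂_i λ^α - ∂_j λ^α`. Hence, modulo divergences, `λ^β / β!` does not
change when a unit of `β` moves from one index to another; these moves connect the exponents of
degree `k` below a fixed bound, so the divergences are exactly the kernel of `Γ`. By the fundamental
theorem of calculus along the lines parallel to `v_i - v_j`, integration over `T` also kills
`∂_i λ^α - ∂_j λ^α`, and the same connectivity makes it a positive multiple of `Γ` in degree `k`.
-/

section Exponents

variable {σ M : Type*}

/-- The lattice points of degree `k` bounded by `D`. In dimension three, for constant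
`D = k - 1 - rᵛ`, they form the set `S₃(T, (rᵛ, -1, -1), k)`: the vertex condition
`∑_{l ≠ i} α_l > rᵛ` says that `α_i ≤ k - 1 - rᵛ`. -/
def cappedExponents (k : ℕ) (D : σ →₀ ℕ) : Set (σ →₀ ℕ) :=
  {α | α.degree = k ∧ α ≤ D}

lemma exists_lt_of_degree_eq {α β : σ →₀ ℕ} (h : α.degree = β.degree) (hne : α ≠ β) :
    ∃ i, α i < β i := by
  by_contra! hle
  have hdeg : (α - β).degree + β.degree = α.degree := by
    rw [← map_add, tsub_add_cancel_of_le hle]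
  have hzero : α - β = 0 := (Finsupp.degree_eq_zero_iff _).1 (by lia)
  exact hne ((tsub_eq_zero_iff_le.1 hzero).antisymm hle)

lemma eq_of_forall_edge {k : ℕ} {D : σ →₀ ℕ} {φ : (σ →₀ ℕ) → M}
    (hφ : ∀ δ i j, δ + Finsupp.single i 1 ∈ cappedExponents k D →
      δ + Finsupp.single j 1 ∈ cappedExponents k D →
      φ (δ + Finsupp.single i 1) = φ (δ + Finsupp.single j 1))
    {β γ : σ →₀ ℕ} (hβ : β ∈ cappedExponents k D) (hγ : γ ∈ cappedExponents k D) :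
    φ β = φ γ := by
  induction hn : (β - γ).degree using Nat.strong_induction_on generalizing β with
  | _ n ih =>
    by_cases hne : β = γ
    · rw [hne]
    obtain ⟨i, hi⟩ := exists_lt_of_degree_eq (hγ.1.trans hβ.1.symm) (Ne.symm hne)
    obtain ⟨j, hj⟩ := exists_lt_of_degree_eq (hβ.1.trans hγ.1.symm) hne
    obtain ⟨δ, rfl⟩ : ∃ δ, β = δ + Finsupp.single i 1 :=
      ⟨_, (tsub_add_cancel_of_le (Finsupp.single_le_iff.2 (by lia))).symm⟩
    have hmem : δ + Finsupp.single j 1 ∈ cappedExponents k D := by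
      refine ⟨by simpa using hβ.1, fun l => ?_⟩
      have hδl := hβ.2 l
      have hγl := hγ.2 l
      by_cases hl : l = j
      · subst hl
        simp only [Finsupp.add_apply, Finsupp.single_eq_same] at hj hδl ⊢
        lia
      · simp only [Finsupp.add_apply, Finsupp.single_eq_of_ne hl] at hδl ⊢
        lia
    have hcloser : δ + Finsupp.single j 1 - γ + Finsupp.single i 1 =
        δ + Finsupp.single i 1 - γ := by
      classical
      ext l
      simp only [Finsupp.add_apply, Finsupp.tsub_apply, Finsupp.single_apply] at hi hj ⊢
      grind
    rw [hφ δ i j hβ hmem]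
    refine ih _ ?_ hmem rfl
    rw [← hn, ← hcloser]
    simp

lemma add_single_add_single_mem_cappedExponents {k : ℕ} {D δ : σ →₀ ℕ} {i j : σ} (hij : i ≠ j)
    (hi : δ + Finsupp.single i 1 ∈ cappedExponents k D)
    (hj : δ + Finsupp.single j 1 ∈ cappedExponents k D) :
    δ + Finsupp.single j 1 + Finsupp.single i 1 ∈ cappedExponents (k + 1) D := by
  refine ⟨by rw [map_add, hj.1, Finsupp.degree_single], fun l => ?_⟩
  have hil := hi.2 l
  have hjl := hj.2 l
  classical
  simp only [Finsupp.add_apply, Finsupp.single_apply] at hil hjl ⊢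
  grind

end Exponents

section Polynomials

open MvPolynomial
open scoped Nat

section GammaFunctional

variable {σ K : Type*} [CommSemiring K]

variable (σ K) in
/-- The linear functional sending each monomial `x^α` to `α!`, that is, the integral
`P ↦ ∫ P(y) exp(-∑ y)` over the positive orthant. -/
noncomputable def gammaFunctional : MvPolynomial σ K →ₗ[K] K :=
  (basisMonomials σ K).constr K fun α => α.prod fun _ n => (n ! : K)

lemma gammaFunctional_monomial (α : σ →₀ ℕ) (a : K) :
    gammaFunctional σ K (monomial α a) = a * α.prod fun _ n => (n ! : K) := by
  have h : monomial α a = a • basisMonomials σ K α := by simp [smul_monomial]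
  rw [h, map_smul, gammaFunctional, Module.Basis.constr_basis, smul_eq_mul]

lemma prod_factorial_add_single (α : σ →₀ ℕ) (i : σ) :
    ((α + Finsupp.single i 1).prod fun _ n => (n ! : K)) =
      (α i + 1) * α.prod fun _ n => (n ! : K) := by
  have herase : (α + Finsupp.single i 1).erase i = α.erase i := by
    simp [Finsupp.erase_add]
  rw [← Finsupp.mul_prod_erase' (α + Finsupp.single i 1) i _ (by simp), herase,
    ← Finsupp.mul_prod_erase' α i _ (by simp)]
  simp [Nat.factorial_succ, mul_assoc]

lemma pderiv_monomial_add_single (α : σ →₀ ℕ) (i : σ) (a : K) :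
    pderiv i (monomial (α + Finsupp.single i 1) a) = (α i + 1 : K) • monomial α a := by
  rw [pderiv_monomial, smul_monomial]
  simp [mul_comm]

lemma gammaFunctional_pderiv_of_X_dvd {i : σ} {P : MvPolynomial σ K} (hP : X i ∣ P) :
    gammaFunctional σ K (pderiv i P) = gammaFunctional σ K P := by
  obtain ⟨Q, rfl⟩ := hP
  induction Q using MvPolynomial.induction_on' with
  | monomial α a =>
    have hmul : X i * monomial α a = monomial (α + Finsupp.single i 1) a := by
      rw [X, monomial_mul, one_mul, add_comm]
    rw [hmul, pderiv_monomial_add_single, map_smul, gammaFunctional_monomial,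
      gammaFunctional_monomial, prod_factorial_add_single, smul_eq_mul, mul_left_comm]
  | add P Q hP hQ => simp only [mul_add, map_add, hP, hQ]

end GammaFunctional

section BubblePolynomials

variable {σ K : Type*} [CommSemiring K]

variable (K) in
/-- The span of the monomials with exponent in `cappedExponents k D`: the bubble space `B_k(T; r)`
before the barycentric coordinates are substituted for the variables. -/
noncomputable def bubblePolynomials (k : ℕ) (D : σ →₀ ℕ) : Submodule K (MvPolynomial σ K) :=
  restrictSupport K (cappedExponents k D)

variable {k : ℕ} {D : σ →₀ ℕ}

lemma mem_bubblePolynomials {P : MvPolynomial σ K} :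
    P ∈ bubblePolynomials K k D ↔ ∀ α, P.coeff α ≠ 0 → α ∈ cappedExponents k D := by
  simp only [bubblePolynomials, mem_restrictSupport_iff, Set.subset_def, Finset.mem_coe,
    mem_support_iff]

lemma isHomogeneous_of_mem_bubblePolynomials {P : MvPolynomial σ K}
    (hP : P ∈ bubblePolynomials K k D) : P.IsHomogeneous k := by
  intro α hα
  rw [← (mem_bubblePolynomials.1 hP α hα).1, Finsupp.degree_eq_weight_one]
  rfl

lemma pderiv_mem_bubblePolynomials {P : MvPolynomial σ K} (hP : P ∈ bubblePolynomials K (k + 1) D)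
    (i : σ) : pderiv i P ∈ bubblePolynomials K k D := by
  refine mem_bubblePolynomials.2 fun α hα => ?_
  rw [coeff_pderiv] at hα
  obtain ⟨hdeg, hle⟩ := mem_bubblePolynomials.1 hP _ (left_ne_zero_of_mul hα)
  exact ⟨by simpa using hdeg, le_self_add.trans hle⟩

lemma monomial_mem_bubblePolynomials {α : σ →₀ ℕ} (hα : α ∈ cappedExponents k D) (a : K) :
    monomial α a ∈ bubblePolynomials K k D :=
  (monomial_mem_restrictSupport K).2 (Or.inl hα)

end BubblePolynomials

section EdgeInvariantFunctionals

variable {σ K M : Type*} [Field K] [CharZero K] [AddCommGroup M] [Module K M] {k : ℕ}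
  {D : σ →₀ ℕ} (f : MvPolynomial σ K →ₗ[K] M)

lemma inv_factorial_smul_monomial_eq_of_pderiv_eq {δ : σ →₀ ℕ} {i j : σ} (hij : i ≠ j)
    (h : f (pderiv i (monomial (δ + Finsupp.single j 1 + Finsupp.single i 1) 1)) =
      f (pderiv j (monomial (δ + Finsupp.single j 1 + Finsupp.single i 1) 1))) :
    ((δ + Finsupp.single i 1).prod fun _ n => (n ! : K))⁻¹ •
        f (monomial (δ + Finsupp.single i 1) 1) =
      ((δ + Finsupp.single j 1).prod fun _ n => (n ! : K))⁻¹ •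
        f (monomial (δ + Finsupp.single j 1) 1) := by
  rw [pderiv_monomial_add_single, add_right_comm, pderiv_monomial_add_single, map_smul, map_smul,
    Finsupp.add_apply, Finsupp.add_apply, Finsupp.single_eq_of_ne hij,
    Finsupp.single_eq_of_ne hij.symm, add_zero, add_zero] at h
  simp only [prod_factorial_add_single, mul_inv_rev, mul_smul]
  congr 1
  rw [inv_smul_eq_iff₀ (Nat.cast_add_one_ne_zero _), smul_comm, h,
    inv_smul_smul₀ (Nat.cast_add_one_ne_zero _)]

theorem exists_eq_gammaFunctional_smul
    (hf : ∀ α ∈ cappedExponents (k + 1) D, ∀ i j, α i ≠ 0 → α j ≠ 0 →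
      f (pderiv i (monomial α 1)) = f (pderiv j (monomial α 1))) :
    ∃ m : M, ∀ P ∈ bubblePolynomials K k D, f P = gammaFunctional σ K P • m := by
  obtain hempty | ⟨γ, hγ⟩ := (cappedExponents k D).eq_empty_or_nonempty
  · refine ⟨0, fun P hP => ?_⟩
    rw [bubblePolynomials, hempty, restrictSupport_eq_span, Set.image_empty, Submodule.span_empty,
      Submodule.mem_bot] at hP
    rw [hP, map_zero, map_zero, smul_zero]
  have hfac (α : σ →₀ ℕ) : (α.prod fun _ n => (n ! : K)) ≠ 0 :=
    Finsupp.prod_ne_zero_iff.2 fun i _ => Nat.cast_ne_zero.2 (Nat.factorial_ne_zero _)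
  let ψ : (σ →₀ ℕ) → M := fun α => (α.prod fun _ n => (n ! : K))⁻¹ • f (monomial α 1)
  have hψ : ∀ δ i j, δ + Finsupp.single i 1 ∈ cappedExponents k D →
      δ + Finsupp.single j 1 ∈ cappedExponents k D →
      ψ (δ + Finsupp.single i 1) = ψ (δ + Finsupp.single j 1) := by
    intro δ i j hi hj
    obtain rfl | hij := eq_or_ne i j
    · rfl
    exact inv_factorial_smul_monomial_eq_of_pderiv_eq f hij <|
      hf _ (add_single_add_single_mem_cappedExponents hij hi hj) i j (by simp) (by simp)
  refine ⟨ψ γ, fun P hP => ?_⟩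
  rw [bubblePolynomials, restrictSupport_eq_span] at hP
  refine LinearMap.eqOn_span' (g := (gammaFunctional σ K).smulRight (ψ γ)) ?_ hP
  rintro _ ⟨β, hβ, rfl⟩
  rw [LinearMap.smulRight_apply, gammaFunctional_monomial, one_mul,
    ← eq_of_forall_edge hψ hβ hγ, smul_inv_smul₀ (hfac β)]

end EdgeInvariantFunctionals

end Polynomials

section Divergence

open MvPolynomial

section DivBubblePolynomials

variable {σ K : Type*} [Fintype σ] {k : ℕ} {D : σ →₀ ℕ}

variable (K) in
/-- The tuples `F` for which `∑ j, F_j(λ) v_j` is a bubble field with vanishing normal trace, see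
`divBubbleFields_eq_image_vectorField`. -/
def divBubblePolynomials [CommSemiring K] (k : ℕ) (D : σ →₀ ℕ) :
    Submodule K (σ → MvPolynomial σ K) where
  carrier := {F | (∀ j, F j ∈ bubblePolynomials K k D) ∧ (∀ j, X j ∣ F j) ∧ ∑ j, F j = 0}
  add_mem' hF hG := ⟨fun j => add_mem (hF.1 j) (hG.1 j),
    fun j => dvd_add (hF.2.1 j) (hG.2.1 j), by
      simp only [Pi.add_apply, Finset.sum_add_distrib, hF.2.2, hG.2.2, add_zero]⟩
  zero_mem' := ⟨fun _ => zero_mem _, fun _ => dvd_zero _, Finset.sum_const_zero⟩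
  smul_mem' c _ hF := ⟨fun j => Submodule.smul_mem _ c (hF.1 j),
    fun j => dvd_smul_of_dvd c (hF.2.1 j), by
      simp only [Pi.smul_apply, ← Finset.smul_sum, hF.2.2, smul_zero]⟩

variable (σ K) in
/-- The formal divergence `F ↦ ∑ j, ∂F_j/∂x_j`; see `divergence_vectorField` for its relation to the
divergence of vector fields. -/
noncomputable def polyDivergence [CommSemiring K] : (σ → MvPolynomial σ K) →ₗ[K] MvPolynomial σ K :=
  ∑ j, (pderiv j : Derivation K _ _).toLinearMap ∘ₗ LinearMap.proj j

lemma polyDivergence_apply [CommSemiring K] (F : σ → MvPolynomial σ K) :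
    polyDivergence σ K F = ∑ j, pderiv j (F j) := by
  simp [polyDivergence]

lemma pderiv_monomial_sub_mem_map_polyDivergence [CommRing K] {α : σ →₀ ℕ}
    (hα : α ∈ cappedExponents k D) {i j : σ} (hi : α i ≠ 0) (hj : α j ≠ 0) :
    pderiv i (monomial α 1) - pderiv j (monomial α 1) ∈
      (divBubblePolynomials K k D).map (polyDivergence σ K) := by
  classical
  have hmem : ∀ i l, (Pi.single i (monomial α 1) : σ → MvPolynomial σ K) l ∈
      bubblePolynomials K k D := fun i l => by
    obtain rfl | hl := eq_or_ne l i
    · simpa only [Pi.single_eq_same] using monomial_mem_bubblePolynomials hα 1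
    · simp only [Pi.single_eq_of_ne hl, zero_mem]
  have hdvd : ∀ i l, α i ≠ 0 →
      X l ∣ (Pi.single i (monomial α 1) : σ → MvPolynomial σ K) l := fun i l hi => by
    obtain rfl | hl := eq_or_ne l i
    · simpa only [Pi.single_eq_same] using X_dvd_monomial.2 (Or.inr hi)
    · simp only [Pi.single_eq_of_ne hl, dvd_zero]
  refine ⟨Pi.single i (monomial α 1) - Pi.single j (monomial α 1),
    ⟨fun l => sub_mem (hmem i l) (hmem j l), fun l => dvd_sub (hdvd i l hi) (hdvd j l hj), ?_⟩, ?_⟩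
  · simp only [Pi.sub_apply, Finset.sum_sub_distrib, Finset.sum_pi_single', Finset.mem_univ,
      if_true, sub_self]
  · simp only [map_sub, polyDivergence_apply, Pi.single_apply, apply_ite (pderiv _), map_zero,
      Finset.sum_ite_eq', Finset.mem_univ, if_true]

theorem map_polyDivergence_divBubblePolynomials [Field K] [CharZero K] :
    (divBubblePolynomials K (k + 1) D).map (polyDivergence σ K) =
      bubblePolynomials K k D ⊓ LinearMap.ker (gammaFunctional σ K) := by
  refine le_antisymm ?_ fun P hP => ?_
  · rintro _ ⟨F, ⟨hmem, hdvd, hsum⟩, rfl⟩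
    rw [polyDivergence_apply]
    refine ⟨sum_mem fun j _ => pderiv_mem_bubblePolynomials (hmem j) j, ?_⟩
    rw [SetLike.mem_coe, LinearMap.mem_ker, map_sum,
      Finset.sum_congr rfl fun j _ => gammaFunctional_pderiv_of_X_dvd (hdvd j), ← map_sum, hsum,
      map_zero]
  · obtain ⟨m, hm⟩ := exists_eq_gammaFunctional_smul
      ((divBubblePolynomials K (k + 1) D).map (polyDivergence σ K)).mkQ fun α hα i j hi hj =>
        (Submodule.Quotient.eq _).2 (pderiv_monomial_sub_mem_map_polyDivergence hα hi hj)
    rw [← Submodule.Quotient.mk_eq_zero, ← Submodule.mkQ_apply, hm P hP.1, hP.2, zero_smul]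

end DivBubblePolynomials

section Vanishing

lemma X_dvd_iff_aeval_update_eq_zero {σ R : Type*} [CommRing R] [DecidableEq σ] {j : σ}
    {P : MvPolynomial σ R} :
    X j ∣ P ↔ aeval (Function.update X j 0 : σ → MvPolynomial σ R) P = 0 := by
  constructor
  · rintro ⟨Q, rfl⟩
    rw [map_mul, aeval_X, Function.update_self, zero_mul]
  · intro h
    let π := Ideal.Quotient.mkₐ R (Ideal.span {(X j : MvPolynomial σ R)})
    have hπ : π.comp (aeval (Function.update X j 0)) = π := by
      ext i
      obtain rfl | hi := eq_or_ne i j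
      · simp [π, Ideal.Quotient.eq_zero_iff_mem.2 (Ideal.mem_span_singleton_self _)]
      · simp [hi]
    rw [← Ideal.mem_span_singleton, ← Ideal.Quotient.eq_zero_iff_mem]
    change π P = 0
    rw [← hπ, AlgHom.comp_apply, h, map_zero]

lemma eq_zero_of_forall_pos_eval_eq_zero {ι : Type*} {P : MvPolynomial ι ℝ}
    (h : ∀ y : ι → ℝ, (∀ i, 0 < y i) → eval y P = 0) : P = 0 :=
  funext_set (fun _ => Set.Ioi 0) (fun _ => Set.Ioi_infinite 0) fun y hy => by
    rw [h y fun i => hy i (Set.mem_univ i), map_zero]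

lemma eval_smul_of_isHomogeneous {σ R : Type*} [CommSemiring R] {P : MvPolynomial σ R} {n : ℕ}
    (hP : P.IsHomogeneous n) (c : R) (y : σ → R) : eval (c • y) P = c ^ n * eval y P := by
  rw [eval_eq, eval_eq, Finset.mul_sum]
  refine Finset.sum_congr rfl fun α hα => ?_
  have hdeg : ∑ i ∈ α.support, α i = n := by
    rw [← Finsupp.degree_apply, Finsupp.degree_eq_weight_one]
    exact hP (mem_support_iff.1 hα)
  simp only [Pi.smul_apply, smul_eq_mul, mul_pow, Finset.prod_mul_distrib,
    Finset.prod_pow_eq_pow_sum, hdeg, mul_left_comm]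

variable {ι : Type*} [Fintype ι]

lemma exists_eq_smul_mem_stdSimplex {y : ι → ℝ} (hy : 0 ≤ y) (hne : y ≠ 0) :
    ∃ c : ℝ, c ≠ 0 ∧ ∃ z ∈ stdSimplex ℝ ι, y = c • z := by
  have hpos : 0 < ∑ i, y i := by
    obtain ⟨i, hi⟩ := Function.ne_iff.1 hne
    exact Finset.sum_pos' (fun i _ => hy i) ⟨i, Finset.mem_univ i, (hy i).lt_of_ne' hi⟩
  refine ⟨∑ i, y i, hpos.ne', (∑ i, y i)⁻¹ • y,
    ⟨fun i => mul_nonneg (inv_nonneg.2 hpos.le) (hy i), ?_⟩, (smul_inv_smul₀ hpos.ne' y).symm⟩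
  simp only [Pi.smul_apply, smul_eq_mul, ← Finset.mul_sum, inv_mul_cancel₀ hpos.ne']

lemma eq_zero_of_forall_stdSimplex_eval_eq_zero [Nonempty ι] {P : MvPolynomial ι ℝ} {n : ℕ}
    (hP : P.IsHomogeneous n) (h : ∀ z ∈ stdSimplex ℝ ι, eval z P = 0) : P = 0 := by
  refine eq_zero_of_forall_pos_eval_eq_zero fun y hy => ?_
  obtain ⟨c, -, z, hz, rfl⟩ := exists_eq_smul_mem_stdSimplex (fun i => (hy i).le) fun h0 =>
    (hy (Classical.arbitrary ι)).ne' (congrFun h0 _)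
  rw [eval_smul_of_isHomogeneous hP, h z hz, mul_zero]

lemma X_dvd_of_forall_stdSimplex_eval_eq_zero {P : MvPolynomial ι ℝ} {n : ℕ}
    (hP : P.IsHomogeneous n) (hn : n ≠ 0) {j : ι}
    (h : ∀ z ∈ stdSimplex ℝ ι, z j = 0 → eval z P = 0) : X j ∣ P := by
  classical
  refine X_dvd_iff_aeval_update_eq_zero.2 <| eq_zero_of_forall_pos_eval_eq_zero fun y hy => ?_
  have hupdate : eval y (aeval (Function.update X j 0) P) = eval (Function.update y j 0) P := by
    rw [← aeval_eq_eval, ← aeval_eq_eval, ← AlgHom.comp_apply, comp_aeval]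
    congr 2 with i
    obtain rfl | hi := eq_or_ne i j <;> simp [*]
  rw [hupdate]
  obtain h0 | hne := eq_or_ne (Function.update y j 0) 0
  · rw [h0, ← zero_smul ℝ (0 : ι → ℝ), eval_smul_of_isHomogeneous hP, zero_pow hn, zero_mul]
  have hnonneg : 0 ≤ Function.update y j 0 :=
    le_update_iff.2 ⟨le_rfl, fun i _ => (hy i).le⟩
  obtain ⟨c, hc, z, hz, hzy⟩ := exists_eq_smul_mem_stdSimplex hnonneg hne
  have hzj : c * z j = 0 := by
    simpa only [Function.update_self, Pi.smul_apply, smul_eq_mul] using (congrFun hzy j).symm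
  rw [hzy, eval_smul_of_isHomogeneous hP, h z hz ((mul_eq_zero.1 hzj).resolve_left hc), mul_zero]

end Vanishing

end Divergence

section Integration

variable {E : Type*} [NormedAddCommGroup E] [NormedSpace ℝ E]

section Lines

variable [MeasurableSpace E] [BorelSpace E] [SecondCountableTopology E] {μ : Measure E} [SFinite μ]
  [μ.IsAddRightInvariant]

lemma measurePreserving_shear {w : E} {φ : StrongDual ℝ E} (hφ : φ w = 1) :
    MeasurePreserving (fun p : ℝ × E => (φ p.2, p.2 + p.1 • w)) (volume.prod μ)
      (volume.prod μ) := by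
  have hshift : MeasurePreserving (fun p : ℝ × E => (p.1, p.2 + p.1 • w))
      (volume.prod μ) (volume.prod μ) :=
    (MeasurePreserving.id volume).skew_product (g := fun t x => x + t • w) (by fun_prop) <|
      .of_forall fun t => (measurePreserving_add_right μ (t • w)).map_eq
  have hreflect : MeasurePreserving (fun p : E × ℝ => (p.1, φ p.1 - p.2))
      (μ.prod volume) (μ.prod volume) :=
    (MeasurePreserving.id μ).skew_product (g := fun x t => φ x - t) (by fun_prop) <|
      .of_forall fun x => (Measure.measurePreserving_sub_left volume (φ x)).map_eq
  convert Measure.measurePreserving_swap.comp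
    (hreflect.comp (Measure.measurePreserving_swap.comp hshift)) using 2 with p
  simp [hφ]

-- Fubini without choosing a complement of the line: averaging over the translates `x + t • w` with
-- the weight `χ (φ x)` recovers `∫ f`, because the shear preserves the product measure.
theorem integral_eq_zero_of_forall_integral_line_eq_zero {F : Type*} [NormedAddCommGroup F]
    [NormedSpace ℝ F] {f : E → F} (hf : Integrable f μ) {w : E}
    (hw : w ≠ 0) (hline : ∀ x, ∫ t : ℝ, f (x + t • w) = 0) : ∫ x, f x ∂μ = 0 := by
  obtain ⟨φ, hφ⟩ := SeparatingDual.exists_eq_one (R := ℝ) hw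
  let χ : ℝ → ℝ := (Set.Icc 0 1).indicator 1
  have hχ : ∫ t, χ t = 1 := by simp [χ, integral_indicator]
  have hχi : Integrable χ :=
    (integrable_indicator_iff measurableSet_Icc).2 continuousOn_const.integrableOn_Icc
  have hshear := measurePreserving_shear (μ := μ) hφ
  have hint : Integrable (fun p : ℝ × E => χ p.1 • f p.2) (volume.prod μ) := hχi.smul_prod hf
  have hint' : Integrable (fun p : ℝ × E => χ (φ p.2) • f (p.2 + p.1 • w)) (volume.prod μ) :=
    hshear.integrable_comp_of_integrable hint
  calc ∫ x, f x ∂μ = ∫ p, χ p.1 • f p.2 ∂volume.prod μ := by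
        rw [integral_prod_smul, hχ, one_smul]
    _ = ∫ p, χ (φ p.2) • f (p.2 + p.1 • w) ∂volume.prod μ := by
        rw [← integral_map (f := fun p : ℝ × E => χ p.1 • f p.2) hshear.measurable.aemeasurable
          (hshear.map_eq.symm ▸ hint.aestronglyMeasurable), hshear.map_eq]
    _ = ∫ x, χ (φ x) • (∫ t : ℝ, f (x + t • w)) ∂μ := by
        rw [integral_prod_symm _ hint']
        simp only [integral_smul]
    _ = 0 := by simp only [hline, smul_zero, integral_zero]

end Lines

lemma setIntegral_Icc_fderiv_line_eq_zero {g : E → ℝ} (hg : ContDiff ℝ 1 g) (x w : E) {p q : ℝ}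
    (hpq : p ≤ q → g (x + p • w) = 0 ∧ g (x + q • w) = 0) :
    ∫ t in Set.Icc p q, fderiv ℝ g (x + t • w) w = 0 := by
  obtain hlt | hle := lt_or_ge q p
  · rw [Set.Icc_eq_empty hlt.not_ge, setIntegral_empty]
  have hderiv (t : ℝ) : HasDerivAt (fun t : ℝ => g (x + t • w)) (fderiv ℝ g (x + t • w) w) t := by
    have hline : HasDerivAt (fun t : ℝ => x + t • w) w t := by
      simpa only [one_smul, id_eq] using ((hasDerivAt_id t).smul_const w).const_add x
    exact (hg.differentiable one_ne_zero _).hasFDerivAt.comp_hasDerivAt t hline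
  have hcont : Continuous fun t : ℝ => fderiv ℝ g (x + t • w) w :=
    ((hg.continuous_fderiv one_ne_zero).comp (by fun_prop)).clm_apply continuous_const
  rw [integral_Icc_eq_integral_Ioc, ← intervalIntegral.integral_of_le hle,
    intervalIntegral.integral_eq_sub_of_hasDerivAt (fun t _ => hderiv t)
      (hcont.intervalIntegrable p q), (hpq hle).1, (hpq hle).2, sub_zero]

section Simplex

variable {ι : Type*} (b : AffineBasis ι ℝ E)

lemma coord_add_smul_sub (i j l : ι) (x : E) (t : ℝ) :
    b.coord l (x + t • (b j - b i)) = b.coord l x + t * (b.coord l (b j) - b.coord l (b i)) := by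
  have hlin : (b.coord l).linear (b j - b i) = b.coord l (b j) - b.coord l (b i) :=
    (b.coord l).linearMap_vsub (b j) (b i)
  rw [add_comm x, ← vadd_eq_add, AffineMap.map_vadd, map_smul, hlin, vadd_eq_add, smul_eq_mul,
    add_comm]

variable {b}

lemma add_smul_mem_convexHull_iff [Finite ι] {i j : ι} (hij : i ≠ j) (x : E) (t : ℝ) :
    x + t • (b j - b i) ∈ convexHull ℝ (Set.range b) ↔
      (∀ l, l ≠ i → l ≠ j → 0 ≤ b.coord l x) ∧ t ∈ Set.Icc (-b.coord j x) (b.coord i x) := by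
  have hi : b.coord i (x + t • (b j - b i)) = b.coord i x - t := by
    rw [coord_add_smul_sub, b.coord_apply_ne hij, b.coord_apply_eq]
    ring
  have hj : b.coord j (x + t • (b j - b i)) = b.coord j x + t := by
    rw [coord_add_smul_sub, b.coord_apply_ne hij.symm, b.coord_apply_eq]
    ring
  have hl (l : ι) (hli : l ≠ i) (hlj : l ≠ j) : b.coord l (x + t • (b j - b i)) = b.coord l x := by
    rw [coord_add_smul_sub, b.coord_apply_ne hli, b.coord_apply_ne hlj, sub_zero, mul_zero,
      add_zero]
  rw [b.convexHull_eq_nonneg_coord, Set.mem_ofPred_eq, Set.mem_Icc, neg_le_iff_add_nonneg',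
    ← sub_nonneg (b := t), ← hi, ← hj]
  refine ⟨fun h => ⟨fun l hli hlj => hl l hli hlj ▸ h l, h j, h i⟩, fun ⟨h, h_j, h_i⟩ l => ?_⟩
  obtain rfl | hli := eq_or_ne l i
  · exact h_i
  obtain rfl | hlj := eq_or_ne l j
  · exact h_j
  exact (hl l hli hlj).symm ▸ h l hli hlj

theorem integral_convexHull_fderiv_edge_eq_zero [Finite ι] [FiniteDimensional ℝ E]
    [MeasurableSpace E] [BorelSpace E] {μ : Measure E} [μ.IsAddHaarMeasure] {i j : ι} (hij : i ≠ j)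
    {g : E → ℝ} (hg : ContDiff ℝ 1 g)
    (hgi : ∀ x ∈ convexHull ℝ (Set.range b), b.coord i x = 0 → g x = 0)
    (hgj : ∀ x ∈ convexHull ℝ (Set.range b), b.coord j x = 0 → g x = 0) :
    ∫ x in convexHull ℝ (Set.range b), fderiv ℝ g x (b j - b i) ∂μ = 0 := by
  have hT : IsCompact (convexHull ℝ (Set.range b)) := (Set.finite_range b).isCompact_convexHull ℝ
  have hcont : Continuous fun x => fderiv ℝ g x (b j - b i) :=
    (hg.continuous_fderiv one_ne_zero).clm_apply continuous_const
  rw [← integral_indicator hT.measurableSet]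
  refine integral_eq_zero_of_forall_integral_line_eq_zero
    ((hcont.continuousOn.integrableOn_compact hT).integrable_indicator hT.measurableSet)
    (sub_ne_zero.2 (b.ind.injective.ne hij.symm)) fun x => ?_
  by_cases hrest : ∀ l, l ≠ i → l ≠ j → 0 ≤ b.coord l x
  · have hmem (t : ℝ) : x + t • (b j - b i) ∈ convexHull ℝ (Set.range b) ↔
        t ∈ Set.Icc (-b.coord j x) (b.coord i x) := by
      rw [add_smul_mem_convexHull_iff hij, and_iff_right hrest]
    calc ∫ t : ℝ, (convexHull ℝ (Set.range b)).indicator (fun y => fderiv ℝ g y (b j - b i))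
          (x + t • (b j - b i))
        = ∫ t in Set.Icc (-b.coord j x) (b.coord i x),
            fderiv ℝ g (x + t • (b j - b i)) (b j - b i) := by
          classical
          rw [← integral_indicator measurableSet_Icc]
          refine integral_congr_ae (.of_forall fun t => ?_)
          simp only [Set.indicator_apply, hmem t]
      _ = 0 := by
          refine setIntegral_Icc_fderiv_line_eq_zero hg x _ fun hle =>
            ⟨hgj _ ((hmem _).2 ⟨le_rfl, hle⟩) ?_, hgi _ ((hmem _).2 ⟨hle, le_rfl⟩) ?_⟩
          · rw [coord_add_smul_sub, b.coord_apply_eq, b.coord_apply_ne hij.symm]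
            ring
          · rw [coord_add_smul_sub, b.coord_apply_eq, b.coord_apply_ne hij]
            ring
  · have hmem (t : ℝ) : x + t • (b j - b i) ∉ convexHull ℝ (Set.range b) := fun ht =>
      hrest ((add_smul_mem_convexHull_iff hij x t).1 ht).1
    simp only [Set.indicator_of_notMem (hmem _), integral_zero]

end Simplex

end Integration

section Barycentric

open MvPolynomial

section ChainRule

variable {σ 𝕜 E : Type*} [NontriviallyNormedField 𝕜] [NormedAddCommGroup E] [NormedSpace 𝕜 E]

lemma hasFDerivAt_eval [Fintype σ] {f : σ → E → 𝕜} {f' : σ → E →L[𝕜] 𝕜} {x : E}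
    (hf : ∀ i, HasFDerivAt (f i) (f' i) x) (P : MvPolynomial σ 𝕜) :
    HasFDerivAt (fun y => eval (fun i => f i y) P)
      (∑ i, eval (fun i => f i x) (pderiv i P) • f' i) x := by
  induction P using MvPolynomial.induction_on with
  | C a =>
    simp only [eval_C]
    refine (hasFDerivAt_const a x).congr_fderiv ?_
    ext w
    simp
  | add P Q hP hQ =>
    simp only [map_add]
    refine (hP.fun_add hQ).congr_fderiv ?_
    ext w
    simp [add_mul, Finset.sum_add_distrib]
  | mul_X P i hP =>
    classical
    simp only [map_mul, eval_X]
    refine (hP.fun_mul (hf i)).congr_fderiv ?_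
    ext w
    simp [pderiv_X, Pi.single_apply, add_mul, Finset.sum_add_distrib, Finset.mul_sum, apply_ite,
      ite_mul, mul_assoc]

lemma contDiff_eval {n : WithTop ℕ∞} {f : σ → E → 𝕜} (hf : ∀ i, ContDiff 𝕜 n (f i))
    (P : MvPolynomial σ 𝕜) : ContDiff 𝕜 n fun y => eval (fun i => f i y) P := by
  simp only [eval_eq]
  fun_prop

end ChainRule

variable {ι E : Type*} [NormedAddCommGroup E] [NormedSpace ℝ E] (b : AffineBasis ι ℝ E)

/-- Substitution of the barycentric coordinates for the variables, `P ↦ P(λ)`. -/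
noncomputable def baryEval : MvPolynomial ι ℝ →ₐ[ℝ] E → ℝ :=
  aeval fun i => ⇑(b.coord i)

lemma baryEval_apply (P : MvPolynomial ι ℝ) (x : E) :
    baryEval b P x = eval (fun i => b.coord i x) P := by
  change ((Pi.evalAlgHom ℝ (fun _ => ℝ) x).comp (aeval fun i => ⇑(b.coord i))) P = _
  rw [comp_aeval, aeval_eq_eval]
  rfl

variable {b}

lemma baryEval_eq_zero_of_X_dvd {P : MvPolynomial ι ℝ} {j : ι} (hP : X j ∣ P) {x : E}
    (hx : b.coord j x = 0) : baryEval b P x = 0 := by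
  obtain ⟨Q, rfl⟩ := hP
  rw [baryEval_apply, map_mul, eval_X, hx, zero_mul]

lemma baryEval_monomial_one [Fintype ι] (α : ι →₀ ℕ) (x : E) :
    baryEval b (monomial α 1) x = ∏ i, b.coord i x ^ α i := by
  rw [baryEval_apply, eval_monomial, one_mul, Finsupp.prod_fintype _ _ fun _ => pow_zero _]

lemma fderiv_baryEval_apply [Fintype ι] [FiniteDimensional ℝ E] (P : MvPolynomial ι ℝ)
    (x w : E) :
    fderiv ℝ (baryEval b P) x w = ∑ i, baryEval b (pderiv i P) x * (b.coord i).linear w := by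
  have hcoord (i : ι) :
      HasFDerivAt (b.coord i) (LinearMap.toContinuousLinearMap (b.coord i).linear) x :=
    (⟨b.coord i, (b.coord i).continuous_of_finiteDimensional⟩ : E →ᴬ[ℝ] ℝ).hasFDerivAt
  simp only [funext (baryEval_apply b P), baryEval_apply]
  rw [(hasFDerivAt_eval hcoord P).fderiv]
  simp

lemma contDiff_baryEval [FiniteDimensional ℝ E] {n : WithTop ℕ∞} (P : MvPolynomial ι ℝ) :
    ContDiff ℝ n (baryEval b P) := by
  rw [funext (baryEval_apply b P)]
  exact contDiff_eval (fun i =>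
    (⟨b.coord i, (b.coord i).continuous_of_finiteDimensional⟩ : E →ᴬ[ℝ] ℝ).contDiff) P

end Barycentric

section BaryIntegral

open MvPolynomial

variable {ι E : Type*} [NormedAddCommGroup E] [NormedSpace ℝ E] [FiniteDimensional ℝ E]
  [MeasurableSpace E] [BorelSpace E] (b : AffineBasis ι ℝ E) (μ : Measure E) [μ.IsAddHaarMeasure]

variable {b μ} in
lemma integrableOn_baryEval [Finite ι] (P : MvPolynomial ι ℝ) :
    IntegrableOn (baryEval b P) (convexHull ℝ (Set.range b)) μ :=
  (contDiff_baryEval (n := 0) P).continuous.continuousOn.integrableOn_compact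
    ((Set.finite_range b).isCompact_convexHull ℝ)

variable [Fintype ι]

/-- The linear functional `P ↦ ∫_T P(λ)` on the simplex `T` spanned by `b`. -/
noncomputable def baryIntegral : MvPolynomial ι ℝ →ₗ[ℝ] ℝ where
  toFun P := ∫ x in convexHull ℝ (Set.range b), baryEval b P x ∂μ
  map_add' P Q := by
    simp only [map_add, Pi.add_apply]
    exact integral_add (integrableOn_baryEval P) (integrableOn_baryEval Q)
  map_smul' a P := by
    simp only [map_smul, Pi.smul_apply, RingHom.id_apply]
    exact integral_smul a _

lemma baryIntegral_apply (P : MvPolynomial ι ℝ) :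
    baryIntegral b μ P = ∫ x in convexHull ℝ (Set.range b), baryEval b P x ∂μ := rfl

lemma baryIntegral_pderiv_eq {P : MvPolynomial ι ℝ} {i j : ι} (hi : X i ∣ P) (hj : X j ∣ P) :
    baryIntegral b μ (pderiv i P) = baryIntegral b μ (pderiv j P) := by
  classical
  obtain rfl | hij := eq_or_ne i j
  · rfl
  have hedge (x : E) : fderiv ℝ (baryEval b P) x (b j - b i) =
      baryEval b (pderiv j P - pderiv i P) x := by
    have hlin (l : ι) : (b.coord l).linear (b j - b i) =
        (if l = j then 1 else 0) - if l = i then 1 else 0 := by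
      rw [← b.coord_apply, ← b.coord_apply]
      exact (b.coord l).linearMap_vsub (b j) (b i)
    rw [map_sub (baryEval b), Pi.sub_apply, fderiv_baryEval_apply]
    simp only [hlin, mul_sub, mul_ite, mul_one, mul_zero, Finset.sum_sub_distrib,
      Finset.sum_ite_eq', Finset.mem_univ, if_true]
  rw [eq_comm, ← sub_eq_zero, ← map_sub, baryIntegral_apply]
  simp only [← hedge]
  exact integral_convexHull_fderiv_edge_eq_zero hij (contDiff_baryEval P)
    (fun _ _ => baryEval_eq_zero_of_X_dvd hi) (fun _ _ => baryEval_eq_zero_of_X_dvd hj)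

lemma baryIntegral_monomial_pos (α : ι →₀ ℕ) : 0 < baryIntegral b μ (monomial α 1) := by
  rw [baryIntegral_apply, setIntegral_pos_iff_support_of_nonneg_ae _ (integrableOn_baryEval _)]
  · refine (isOpen_interior.measure_pos μ
      ⟨_, b.centroid_mem_interior_convexHull⟩).trans_le (measure_mono fun x hx => ?_)
    refine ⟨?_, interior_subset hx⟩
    rw [b.interior_convexHull] at hx
    rw [Function.mem_support, baryEval_monomial_one]
    exact (Finset.prod_pos fun i _ => pow_pos (hx i) _).ne'
  · refine (ae_restrict_iff' ((Set.finite_range b).isCompact_convexHull ℝ).measurableSet).2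
      (.of_forall fun x hx => ?_)
    rw [b.convexHull_eq_nonneg_coord] at hx
    rw [Pi.zero_apply, baryEval_monomial_one]
    exact Finset.prod_nonneg fun i _ => pow_nonneg (hx i) _

theorem exists_pos_forall_baryIntegral_eq (k : ℕ) :
    ∃ c > 0, ∀ P : MvPolynomial ι ℝ, P.IsHomogeneous k →
      baryIntegral b μ P = c * gammaFunctional ι ℝ P := by
  obtain ⟨i⟩ := b.nonempty
  let D : ι →₀ ℕ := Finsupp.equivFunOnFinite.symm fun _ => k
  obtain ⟨c, hc⟩ := exists_eq_gammaFunctional_smul (k := k) (D := D) (baryIntegral b μ)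
    fun α _ i j hi hj => baryIntegral_pderiv_eq b μ (X_dvd_monomial.2 (Or.inr hi))
      (X_dvd_monomial.2 (Or.inr hj))
  have hc' (P : MvPolynomial ι ℝ) (hP : P.IsHomogeneous k) :
      baryIntegral b μ P = c * gammaFunctional ι ℝ P := by
    rw [mul_comm, ← smul_eq_mul]
    refine hc P (mem_bubblePolynomials.2 fun α hα => ?_)
    have hdeg : α.degree = k := by
      rw [Finsupp.degree_eq_weight_one]
      exact hP hα
    exact ⟨hdeg, fun l => (Finsupp.le_degree l α).trans_eq hdeg⟩
  have hpos := baryIntegral_monomial_pos b μ (Finsupp.single i k)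
  rw [hc' _ (isHomogeneous_monomial _ (Finsupp.degree_single i k)), gammaFunctional_monomial,
    one_mul, Finsupp.prod_single_index (by simp)] at hpos
  exact ⟨c, (mul_pos_iff_of_pos_right (Nat.cast_pos.2 k.factorial_pos)).1 hpos, hc'⟩

end BaryIntegral

section BubbleFields

open MvPolynomial

section AffineBasis

variable {ι R V : Type*} [Fintype ι] [Ring R] [AddCommGroup V] [Module R V] (b : AffineBasis ι R V)

lemma coord_linear_sum_smul {a : ι → R} (ha : ∑ i, a i = 0) (j : ι) :
    (b.coord j).linear (∑ i, a i • b i) = a j := by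
  classical
  have hlin (i : ι) : (b.coord j).linear (b i) = (if j = i then 1 else 0) - b.coord j 0 := by
    rw [← b.coord_apply, (b.coord j).decomp', Pi.sub_apply]
  simp only [map_sum, map_smul, hlin, smul_eq_mul, mul_sub, mul_ite, mul_one, mul_zero,
    Finset.sum_sub_distrib, Finset.sum_ite_eq, Finset.mem_univ, if_true, ← Finset.sum_mul, ha,
    zero_mul, sub_zero]

lemma sum_coord_linear (w : V) : ∑ j, (b.coord j).linear w = 0 := by
  simp only [AffineMap.decomp', Pi.sub_apply, Finset.sum_sub_distrib,
    b.sum_coord_apply_eq_one, sub_self]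

lemma sum_coord_linear_smul (w : V) : ∑ j, (b.coord j).linear w • b j = w := by
  simp only [AffineMap.decomp', Pi.sub_apply, sub_smul, Finset.sum_sub_distrib,
    b.linear_combination_coord_eq_self, sub_zero]

lemma exists_coord_eq {z : ι → R} (hz : ∑ i, z i = 1) : ∃ x, ∀ i, b.coord i x = z i :=
  ⟨Finset.univ.affineCombination R b z, fun i =>
    b.coord_apply_combination_of_mem (Finset.mem_univ i) hz⟩

end AffineBasis

section Faces

variable {ι V : Type*} [AddCommGroup V] [Module ℝ V] (b : AffineBasis ι ℝ V)

lemma coord_eq_zero_of_mem_convexHull {j : ι} {x : V}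
    (hx : x ∈ convexHull ℝ (b '' {i | i ≠ j})) : b.coord j x = 0 := by
  refine convexHull_min ?_ ((convex_singleton (0 : ℝ)).affine_preimage (b.coord j)) hx
  rintro _ ⟨i, hi, rfl⟩
  exact b.coord_apply_ne (Ne.symm hi)

lemma mem_convexHull_image_ne [Finite ι] {j : ι} {x : V} (hx : ∀ i, 0 ≤ b.coord i x)
    (hj : b.coord j x = 0) : x ∈ convexHull ℝ (b '' {i | i ≠ j}) := by
  classical
  cases nonempty_fintype ι
  rw [← b.linear_combination_coord_eq_self x,
    ← Finset.sum_erase (a := j) Finset.univ (by rw [hj, zero_smul])]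
  refine (convex_convexHull ℝ _).sum_mem (fun i _ => hx i) ?_ fun i hi =>
    subset_convexHull ℝ _ ⟨i, Finset.ne_of_mem_erase hi, rfl⟩
  rw [Finset.sum_erase (f := fun i => b.coord i x) Finset.univ hj, b.sum_coord_apply_eq_one]

end Faces

variable {ι E : Type*} [NormedAddCommGroup E] [NormedSpace ℝ E] (b : AffineBasis ι ℝ E) {k : ℕ}
  {D : ι →₀ ℕ}

lemma eq_zero_of_baryEval_eq_zero [Finite ι] {P : MvPolynomial ι ℝ} {n : ℕ} (hP : P.IsHomogeneous n)
    (h : baryEval b P = 0) : P = 0 := by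
  cases nonempty_fintype ι
  have := b.nonempty
  refine eq_zero_of_forall_stdSimplex_eval_eq_zero hP fun z hz => ?_
  obtain ⟨x, hx⟩ := exists_coord_eq b hz.2
  simpa only [baryEval_apply, hx, Pi.zero_apply] using congrFun h x

lemma X_dvd_of_forall_baryEval_eq_zero [Finite ι] {P : MvPolynomial ι ℝ} {n : ℕ}
    (hP : P.IsHomogeneous n) (hn : n ≠ 0) {j : ι}
    (h : ∀ x ∈ convexHull ℝ (b '' {i | i ≠ j}), baryEval b P x = 0) :
    X j ∣ P := by
  cases nonempty_fintype ι
  refine X_dvd_of_forall_stdSimplex_eval_eq_zero hP hn fun z hz hzj => ?_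
  obtain ⟨x, hx⟩ := exists_coord_eq b hz.2
  have hface := h x (mem_convexHull_image_ne b (fun i => (hx i).symm ▸ hz.1 i) ((hx j).trans hzj))
  simpa only [baryEval_apply, hx] using hface

/-- The divergence of a vector field, as the trace of its derivative; like `fderiv`, it is junk
where the field is not differentiable. -/
noncomputable def divergence (u : E → E) (x : E) : ℝ :=
  LinearMap.trace ℝ E (fderiv ℝ u x)

/-- The bubble space: functions `P(λ)` with `P` in the span of the monomials of degree `k` and
exponent at most `D`. In dimension three, a constant `D = k - 1 - rᵛ` gives `B_k(T; (rᵛ, -1, -1))`;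
general `D` allow for a different smoothness at each vertex. -/
noncomputable def bubbleFunctions (k : ℕ) (D : ι →₀ ℕ) : Submodule ℝ (E → ℝ) :=
  (bubblePolynomials ℝ k D).map (baryEval b).toLinearMap

/-- The bubble vector fields `𝔹_k^{div}(T)`, without coordinates: the components are taken along
all linear functionals, and `∇λ_j` serves as the normal of the face opposite to the vertex `j`. -/
def divBubbleFields (k : ℕ) (D : ι →₀ ℕ) : Set (E → E) :=
  {u | (∀ φ : Module.Dual ℝ E, φ ∘ u ∈ bubbleFunctions b k D) ∧
    ∀ j, ∀ x ∈ convexHull ℝ (b '' {i | i ≠ j}), (b.coord j).linear (u x) = 0}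

section VectorField

variable [Fintype ι]

/-- The vector field `∑ j, F_j(λ) v_j`. Since `∇λ_j · v_i = δ_ij - λ_j(0)`, its component along
`∇λ_j` is `F_j(λ)` as soon as the `F_j` sum to zero. -/
noncomputable def vectorField (F : ι → MvPolynomial ι ℝ) (x : E) : E :=
  ∑ j, baryEval b (F j) x • b j

lemma coord_linear_vectorField {F : ι → MvPolynomial ι ℝ} (hF : ∑ j, F j = 0) (j : ι) (x : E) :
    (b.coord j).linear (vectorField b F x) = baryEval b (F j) x := by
  refine coord_linear_sum_smul b ?_ j
  rw [← Finset.sum_apply, ← map_sum, hF, map_zero, Pi.zero_apply]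

lemma vectorField_mem_divBubbleFields {F : ι → MvPolynomial ι ℝ}
    (hF : F ∈ divBubblePolynomials ℝ k D) : vectorField b F ∈ divBubbleFields b k D := by
  obtain ⟨hmem, hdvd, hsum⟩ := hF
  refine ⟨fun φ => ?_, fun j x hx => ?_⟩
  · have hφ : φ ∘ vectorField b F = ∑ j, φ (b j) • baryEval b (F j) := by
      ext x
      simp only [vectorField, Function.comp_apply, map_sum, map_smul, Finset.sum_apply,
        Pi.smul_apply, smul_eq_mul, mul_comm]
    rw [hφ]
    exact sum_mem fun j _ => Submodule.smul_mem _ _ (Submodule.mem_map_of_mem (hmem j))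
  · rw [coord_linear_vectorField b hsum]
    exact baryEval_eq_zero_of_X_dvd (hdvd j) (coord_eq_zero_of_mem_convexHull b hx)

lemma exists_vectorField_eq {u : E → E} (hu : u ∈ divBubbleFields b (k + 1) D) :
    ∃ F ∈ divBubblePolynomials ℝ (k + 1) D, vectorField b F = u := by
  choose F hF hFu using fun j => hu.1 (b.coord j).linear
  have hFu' (j : ι) (x : E) : baryEval b (F j) x = (b.coord j).linear (u x) := congrFun (hFu j) x
  have hhom (j : ι) : (F j).IsHomogeneous (k + 1) := isHomogeneous_of_mem_bubblePolynomials (hF j)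
  refine ⟨F, ⟨hF, fun j => ?_, ?_⟩, ?_⟩
  · refine X_dvd_of_forall_baryEval_eq_zero b (hhom j) k.succ_ne_zero fun x hx => ?_
    rw [hFu', hu.2 j x hx]
  · refine eq_zero_of_baryEval_eq_zero b (IsHomogeneous.sum _ _ _ fun j _ => hhom j) ?_
    ext x
    simp only [map_sum, Finset.sum_apply, hFu', sum_coord_linear, Pi.zero_apply]
  · ext x
    simp only [vectorField, hFu', sum_coord_linear_smul]

lemma divBubbleFields_eq_image_vectorField :
    divBubbleFields b (k + 1) D = vectorField b '' divBubblePolynomials ℝ (k + 1) D :=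
  Set.Subset.antisymm (fun _ => exists_vectorField_eq b) <|
    Set.image_subset_iff.2 fun _ => vectorField_mem_divBubbleFields b

lemma divergence_vectorField [FiniteDimensional ℝ E] {F : ι → MvPolynomial ι ℝ}
    (hF : ∑ j, F j = 0) : divergence (vectorField b F) = baryEval b (polyDivergence ι ℝ F) := by
  ext x
  have hfderiv : HasFDerivAt (vectorField b F)
      (∑ j, (fderiv ℝ (baryEval b (F j)) x).smulRight (b j)) x :=
    .fun_sum fun j _ => ((contDiff_baryEval (n := 1) (F j)).differentiable one_ne_zero
      x).hasFDerivAt.smul_const (b j)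
  have hsum (i : ι) : ∑ j, baryEval b (pderiv i (F j)) x = 0 := by
    rw [← Finset.sum_apply, ← map_sum, ← map_sum, hF, map_zero, map_zero, Pi.zero_apply]
  calc divergence (vectorField b F) x = ∑ j, fderiv ℝ (baryEval b (F j)) x (b j) := by
        rw [divergence, hfderiv.fderiv, ContinuousLinearMap.toLinearMap_sum, map_sum]
        exact Finset.sum_congr rfl fun j _ => LinearMap.trace_smulRight _ _
    _ = ∑ i, (b.coord i).linear (∑ j, baryEval b (pderiv i (F j)) x • b j) := by
        simp only [fderiv_baryEval_apply, map_sum, map_smul, smul_eq_mul]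
        exact Finset.sum_comm
    _ = baryEval b (polyDivergence ι ℝ F) x := by
        simp only [coord_linear_sum_smul b (hsum _), polyDivergence_apply, map_sum,
          Finset.sum_apply]

end VectorField

theorem div_bubble_stability_re_neg_one_general [Finite ι] [FiniteDimensional ℝ E]
    [MeasurableSpace E] [BorelSpace E] (μ : Measure E) [μ.IsAddHaarMeasure] (k : ℕ) (D : ι →₀ ℕ) :
    divergence '' divBubbleFields b (k + 1) D =
      {p | p ∈ bubbleFunctions b k D ∧ ∫ x in convexHull ℝ (Set.range b), p x ∂μ = 0} := by
  cases nonempty_fintype ι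
  obtain ⟨c, hc, hint⟩ := exists_pos_forall_baryIntegral_eq b μ k
  calc divergence '' divBubbleFields b (k + 1) D
      = baryEval b '' ((divBubblePolynomials ℝ (k + 1) D).map (polyDivergence ι ℝ) :
          Submodule ℝ (MvPolynomial ι ℝ)) := by
        rw [divBubbleFields_eq_image_vectorField, Submodule.map_coe, Set.image_image,
          Set.image_image]
        exact Set.image_congr fun F hF => divergence_vectorField b hF.2.2
    _ = baryEval b '' {P | P ∈ bubblePolynomials ℝ k D ∧ baryIntegral b μ P = 0} := by
        rw [map_polyDivergence_divBubblePolynomials]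
        refine congrArg _ (Set.ext fun P => and_congr_right fun hP => ?_)
        rw [hint P (isHomogeneous_of_mem_bubblePolynomials hP), mul_eq_zero_iff_left hc.ne']
        exact LinearMap.mem_ker
    _ = {p | p ∈ bubbleFunctions b k D ∧ ∫ x in convexHull ℝ (Set.range b), p x ∂μ = 0} := by
        ext p
        constructor
        · rintro ⟨P, ⟨hP, hP0⟩, rfl⟩
          exact ⟨⟨P, hP, rfl⟩, hP0⟩
        · rintro ⟨⟨P, hP, rfl⟩, hP0⟩
          exact ⟨P, ⟨hP, hP0⟩, rfl⟩

end BubbleFields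

section Tetrahedron

open MvPolynomial

section Duality

variable {ι R V : Type*} [CommRing R] [AddCommGroup V] [Module R V] (b : AffineBasis ι R V)

lemma dual_apply_eq_mul_coord_linear [Finite ι] {φ : Module.Dual R V} {j : ι} {t : R}
    (h : ∀ i, i ≠ j → φ (b i) = t) (w : V) :
    φ w = (φ (b j) - t) * (b.coord j).linear w := by
  classical
  cases nonempty_fintype ι
  have hφ (i : ι) : φ (b i) = t + if i = j then φ (b j) - t else 0 := by
    split_ifs with hi
    · rw [hi, add_sub_cancel]
    · rw [h i hi, add_zero]
  generalize φ (b j) - t = s at hφ ⊢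
  calc φ w = ∑ i, (b.coord i).linear w * φ (b i) := by
        conv_lhs => rw [← sum_coord_linear_smul b w]
        simp only [map_sum, map_smul, smul_eq_mul]
    _ = s * (b.coord j).linear w := by
        simp only [hφ, mul_add, mul_ite, mul_zero, Finset.sum_add_distrib, ← Finset.sum_mul,
          sum_coord_linear, zero_mul, zero_add, Finset.sum_ite_eq', Finset.mem_univ, if_true]
        exact mul_comm _ _

lemma forall_dual_eq_zero_iff_coord_linear_eq_zero [Finite ι] [Nontrivial ι] {j : ι} {w : V} :
    (∀ φ : Module.Dual R V, (∀ a, a ≠ j → ∀ c, c ≠ j → φ (b a - b c) = 0) → φ w = 0) ↔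
      (b.coord j).linear w = 0 := by
  constructor
  · refine fun h => h _ fun a ha c hc => ?_
    rw [← vsub_eq_sub, AffineMap.linearMap_vsub, b.coord_apply_ne ha.symm,
      b.coord_apply_ne hc.symm, vsub_self]
  · intro hw φ hφ
    obtain ⟨a, ha⟩ := exists_ne j
    rw [dual_apply_eq_mul_coord_linear b (t := φ (b a)) (fun i hi => ?_) w, hw, mul_zero]
    rw [← sub_eq_zero, ← map_sub, hφ i hi a ha]

end Duality

section Coordinates

variable {n : Type*}

lemma forall_dual_comp_mem_iff {R X : Type*} [Finite n] [CommSemiring R] {S : Submodule R (X → R)}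
    {u : X → n → R} :
    (∀ φ : Module.Dual R (n → R), φ ∘ u ∈ S) ↔ ∀ m, (fun x => u x m) ∈ S := by
  classical
  cases nonempty_fintype n
  refine ⟨fun h m => h (LinearMap.proj m), fun h φ => ?_⟩
  have hφ : φ ∘ u = ∑ m, φ (Pi.single m 1) • fun x => u x m := by
    ext x
    conv_lhs => rw [Function.comp_apply, pi_eq_sum_univ' (u x)]
    simp only [map_sum, map_smul, Finset.sum_apply, Pi.smul_apply, smul_eq_mul, mul_comm]
  rw [hφ]
  exact sum_mem fun m _ => S.smul_mem _ (h m)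

lemma divergence_eq_sum_fderiv [Fintype n] [DecidableEq n] {u : (n → ℝ) → n → ℝ} {x : n → ℝ}
    (hu : DifferentiableAt ℝ u x) :
    divergence u x = ∑ m, fderiv ℝ (fun y => u y m) x (Pi.single m 1) := by
  rw [divergence, LinearMap.trace_eq_matrix_trace ℝ (Pi.basisFun ℝ n), Matrix.trace]
  refine Finset.sum_congr rfl fun m _ => ?_
  rw [Matrix.diag_apply, LinearMap.toMatrix_apply,
    (hasFDerivAt_pi'.1 hu.hasFDerivAt m).fderiv]
  simp

end Coordinates

lemma mem_interiorLattice_iff {k : ℕ} {rv : ℤ} {α : Fin 4 → ℕ} :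
    α ∈ interiorLattice k rv (-1) (-1) ↔ ∑ i, α i = k ∧ ∀ i, (α i : ℤ) + rv < k := by
  refine and_congr_right fun hα => ?_
  have hcompl (i : Fin 4) : ∑ l ∈ ({i} : Finset (Fin 4))ᶜ, (α l : ℤ) = k - α i := by
    rw [eq_sub_iff_add_eq', ← hα, Nat.cast_sum, ← Finset.sum_singleton (fun l => (α l : ℤ)) i]
    exact Finset.sum_add_sum_compl _ _
  constructor
  · intro h i
    have hi := (h {i} (Finset.singleton_nonempty i) (Finset.singleton_ne_univ i)).1
      (Finset.card_singleton i)
    rw [hcompl] at hi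
    lia
  · intro h f _ _
    have hpos : (-1 : ℤ) < ∑ i ∈ fᶜ, (α i : ℤ) :=
      neg_one_lt_zero.trans_le (Finset.sum_nonneg fun i _ => Int.natCast_nonneg _)
    refine ⟨fun hf => ?_, fun _ => hpos, fun _ => hpos⟩
    obtain ⟨i, rfl⟩ := Finset.card_eq_one.1 hf
    rw [hcompl]
    linarith [h i]

variable (b : AffineBasis (Fin 4) ℝ (Fin 3 → ℝ)) {k : ℕ} {D : Fin 4 →₀ ℕ}

lemma bubbleSpace_eq_bubbleFunctions {rv : ℤ} (hD : ∀ i, ∀ n ≤ k, n ≤ D i ↔ (n : ℤ) + rv < k) :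
    bubbleSpace b.coord k rv (-1) (-1) = bubbleFunctions b k D := by
  have hexp (α : Fin 4 →₀ ℕ) :
      ⇑α ∈ interiorLattice k rv (-1) (-1) ↔ α ∈ cappedExponents k D := by
    rw [mem_interiorLattice_iff, ← Finsupp.degree_eq_sum]
    exact and_congr_right fun hα => forall_congr' fun i =>
      (hD i _ ((Finsupp.le_degree i α).trans_eq hα)).symm
  have hbern (α : Fin 4 →₀ ℕ) : baryEval b (monomial α 1) = bernBary3 b.coord α :=
    funext (baryEval_monomial_one α)
  rw [bubbleFunctions, bubblePolynomials, restrictSupport_eq_span, Submodule.map_span,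
    bubbleSpace, Set.image_image]
  refine congrArg _ (Set.Subset.antisymm ?_ ?_)
  · rintro _ ⟨α, hα, rfl⟩
    exact ⟨Finsupp.equivFunOnFinite.symm α, (hexp _).1 hα, hbern _⟩
  · rintro _ ⟨α, hα, rfl⟩
    exact ⟨α, (hexp α).2 hα, (hbern α).symm⟩

lemma normalTraceZero_iff {u : (Fin 3 → ℝ) → Fin 3 → ℝ} :
    normalTraceZero b u ↔
      ∀ j, ∀ x ∈ convexHull ℝ (b '' {i | i ≠ j}), (b.coord j).linear (u x) = 0 := by
  refine forall_congr' fun j => forall₂_congr fun x _ => ?_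
  rw [← forall_dual_eq_zero_iff_coord_linear_eq_zero b,
    ← (dotProductEquiv ℝ (Fin 3)).toEquiv.forall_congr_right]
  rfl

lemma mem_divBubbleFields_iff {u : (Fin 3 → ℝ) → Fin 3 → ℝ} :
    u ∈ divBubbleFields b k D ↔
      (∀ m, (fun x => u x m) ∈ bubbleFunctions b k D) ∧ normalTraceZero b u := by
  rw [normalTraceZero_iff, ← forall_dual_comp_mem_iff]
  rfl

lemma diverg_eq_divergence {u : (Fin 3 → ℝ) → Fin 3 → ℝ} (hu : u ∈ divBubbleFields b k D) :
    diverg u = divergence u := by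
  have hdiff : Differentiable ℝ u := differentiable_pi.2 fun m => by
    obtain ⟨P, -, hP⟩ := ((mem_divBubbleFields_iff b).1 hu).1 m
    rw [← hP]
    exact (contDiff_baryEval (n := 1) P).differentiable one_ne_zero
  exact funext fun x => (divergence_eq_sum_fderiv (hdiff x)).symm

lemma setOf_diverg_eq_image_divergence :
    {p | ∃ u : (Fin 3 → ℝ) → Fin 3 → ℝ, (∀ m, (fun x => u x m) ∈ bubbleFunctions b k D) ∧
      normalTraceZero b u ∧ p = diverg u} = divergence '' divBubbleFields b k D := by
  ext p
  constructor
  · rintro ⟨u, hmem, htrace, rfl⟩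
    have hu := (mem_divBubbleFields_iff b).2 ⟨hmem, htrace⟩
    exact ⟨u, hu, (diverg_eq_divergence b hu).symm⟩
  · rintro ⟨u, hu, rfl⟩
    obtain ⟨hmem, htrace⟩ := (mem_divBubbleFields_iff b).1 hu
    exact ⟨u, hmem, htrace, (diverg_eq_divergence b hu).symm⟩

lemma exists_affineBasis_coord_eq {v : Fin 4 → Fin 3 → ℝ} (hv : AffineIndependent ℝ v)
    {lam : Fin 4 → ((Fin 3 → ℝ) →ᵃ[ℝ] ℝ)} (hlam : ∀ i j, lam i (v j) = if i = j then 1 else 0) :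
    ∃ b : AffineBasis (Fin 4) ℝ (Fin 3 → ℝ), ⇑b = v ∧ b.coord = lam := by
  obtain ⟨b, rfl⟩ : ∃ b : AffineBasis (Fin 4) ℝ (Fin 3 → ℝ), ⇑b = v :=
    ⟨⟨v, hv, by rw [hv.affineSpan_eq_top_iff_card_eq_finrank_add_one]; simp⟩, rfl⟩
  refine ⟨b, rfl, funext fun i => AffineMap.ext_on b.tot ?_⟩
  rintro _ ⟨j, rfl⟩
  rw [hlam, b.coord_apply]

end Tetrahedron

/-- div stability of the `H(div)` bubble space for `r₂ = (rᵛ, −1, −1)`,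
`rᵛ ≥ −1`, `k ≥ max(2rᵛ + 1, 1)` and `r₃ = r₂ ⊖ 1 = (max(rᵛ−1, −1), −1, −1)`:
`div 𝔹ᵈⁱᵛ_k(T; r₂) = 𝔹_{k−1}(T; r₃)/ℝ`, where
`𝔹ᵈⁱᵛ_k(T; r₂) = {u ∈ 𝔹³_k(T; r₂) : u ⋅ n = 0 on ∂T}`. -/
theorem div_bubble_stability_re_neg_one
    (v : Fin 4 → (Fin 3 → ℝ)) (hv : AffineIndependent ℝ v)
    (lam : Fin 4 → ((Fin 3 → ℝ) →ᵃ[ℝ] ℝ))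
    (hlam : ∀ i j, lam i (v j) = if i = j then 1 else 0)
    (hsum : ∀ x : Fin 3 → ℝ, ∑ i, lam i x = 1)
    (rv : ℤ) (hrv : -1 ≤ rv)
    (k : ℕ) (hk1 : 2 * rv + 1 ≤ (k : ℤ)) (hk2 : 1 ≤ k)
    (hS : (interiorLattice (k - 1) (max (rv - 1) (-1)) (-1) (-1)).Nonempty) :
    {p : (Fin 3 → ℝ) → ℝ | ∃ u : (Fin 3 → ℝ) → (Fin 3 → ℝ),
        (∀ m : Fin 3, (fun x => u x m) ∈ bubbleSpace lam k rv (-1) (-1)) ∧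
        normalTraceZero v u ∧ p = diverg u}
      = {p : (Fin 3 → ℝ) → ℝ |
          p ∈ bubbleSpace lam (k - 1) (max (rv - 1) (-1)) (-1) (-1) ∧
          (∫ x in convexHull ℝ (Set.range v), p x) = 0} := by
  obtain ⟨b, rfl, rfl⟩ := exists_affineBasis_coord_eq hv hlam
  obtain ⟨k, rfl⟩ := Nat.exists_eq_add_of_le' hk2
  let D : Fin 4 →₀ ℕ := Finsupp.equivFunOnFinite.symm fun _ => (k - rv).toNat
  have hD (i : Fin 4) : D i = (k - rv).toNat := rfl
  rw [bubbleSpace_eq_bubbleFunctions b (D := D) fun i n _ => by rw [hD]; lia,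
    bubbleSpace_eq_bubbleFunctions b (D := D) fun i n hn => by rw [hD]; lia,
    setOf_diverg_eq_image_divergence]
  exact div_bubble_stability_re_neg_one_general b volume k D
end

section
/- Let u : ℝ³ → ℝ³ be continuously differentiable, let n ∈ ℝ³ be a unit vector, and let x ∈ ℝ³. Write Π w = w − (w·n)·n for the projection onto the plane orthogonal to n, ∂_n for the directional derivative along n, and ∇_f v = ∇v − (∂_n v)·n for the tangential gradient of a scalar function v. Then at the point x: (i) n·(curl u) = n·(curl(Π∘u)), i.e. the normal component of curl u depends only on the tangential part of u; and (ii) n × (curl u) = ∇_f(u·n) − ∂_n(Π∘u), where curl u = ∇ × u. -/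
open scoped BigOperators

/-- The partial derivative `∂_i g` in the `i`-th standard coordinate direction. -/
noncomputable def pd3 (i : Fin 3) (g : (Fin 3 → ℝ) → ℝ) (x : Fin 3 → ℝ) : ℝ :=
  fderiv ℝ g x (Pi.single i 1)

/-- The curl `∇ × u = (∂₂u₃ − ∂₃u₂, ∂₃u₁ − ∂₁u₃, ∂₁u₂ − ∂₂u₁)` (0-based indices). -/
noncomputable def curl3 (u : (Fin 3 → ℝ) → (Fin 3 → ℝ)) (x : Fin 3 → ℝ) : Fin 3 → ℝ :=
  ![pd3 1 (fun y => u y 2) x - pd3 2 (fun y => u y 1) x,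
    pd3 2 (fun y => u y 0) x - pd3 0 (fun y => u y 2) x,
    pd3 0 (fun y => u y 1) x - pd3 1 (fun y => u y 0) x]

/-- The Euclidean dot product on `ℝ³`. -/
def dot3 (a b : Fin 3 → ℝ) : ℝ := ∑ i, a i * b i

/-- The tangential projection `Π w = w − (w⋅n) n` onto the plane orthogonal to `n`. -/
def tangProj (nvec w : Fin 3 → ℝ) : Fin 3 → ℝ := w - (dot3 w nvec) • nvec

/-! Put `φ = u ⋅ n`, so that `Π ∘ u = u - φ n` with `n` constant. Then `curl (φ n) = ∇φ × n` is
orthogonal to `n`, which gives (i). For (ii), `n × curl u = (Du)ᵀ n - (Du) n = ∇φ - ∂_n u`, and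
the term `(∂_n φ) n` appears in both `∇_f φ` and `∂_n (Π ∘ u)`, so that it cancels. -/

/-- The gradient `∇g = (∂₁g, ∂₂g, ∂₃g)`, from which `∇_f` is built. It is a
coordinate vector because Mathlib's `gradient` needs an inner product, absent on `Fin 3 → ℝ`. -/
noncomputable def grad3 (g : (Fin 3 → ℝ) → ℝ) (x : Fin 3 → ℝ) : Fin 3 → ℝ :=
  fun i => pd3 i g x

section VectorCalculus

open scoped Matrix

variable {u v : (Fin 3 → ℝ) → (Fin 3 → ℝ)} {f g : (Fin 3 → ℝ) → ℝ} {x : Fin 3 → ℝ}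

theorem dot3_eq_dotProduct (a b : Fin 3 → ℝ) : dot3 a b = a ⬝ᵥ b := rfl

theorem pd3_const (i : Fin 3) (r : ℝ) (x : Fin 3 → ℝ) : pd3 i (fun _ => r) x = 0 := by
  rw [pd3, fderiv_const_apply, zero_apply]

theorem pd3_sub (hf : DifferentiableAt ℝ f x) (hg : DifferentiableAt ℝ g x) (i : Fin 3) :
    pd3 i (fun y => f y - g y) x = pd3 i f x - pd3 i g x := by
  rw [pd3, fderiv_fun_sub hf hg]
  rfl

theorem pd3_mul (hf : DifferentiableAt ℝ f x) (hg : DifferentiableAt ℝ g x) (i : Fin 3) :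
    pd3 i (fun y => f y * g y) x = f x * pd3 i g x + g x * pd3 i f x := by
  rw [pd3, fderiv_fun_mul hf hg]
  rfl

theorem pd3_sum {ι : Type*} {s : Finset ι} {F : ι → (Fin 3 → ℝ) → ℝ}
    (hF : ∀ j ∈ s, DifferentiableAt ℝ (F j) x) (i : Fin 3) :
    pd3 i (fun y => ∑ j ∈ s, F j y) x = ∑ j ∈ s, pd3 i (F j) x := by
  rw [pd3, fderiv_fun_sum hF, sum_apply]
  rfl

theorem fderiv_apply_eq_dot3_grad3 (g : (Fin 3 → ℝ) → ℝ) (x w : Fin 3 → ℝ) :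
    fderiv ℝ g x w = dot3 w (grad3 g x) := by
  conv_lhs => rw [pi_eq_sum_univ' w]
  simp only [map_sum, map_smul, smul_eq_mul, dot3, grad3, pd3]

theorem fderiv_apply_apply_eq_dot3_grad3 (hu : DifferentiableAt ℝ u x) (w : Fin 3 → ℝ)
    (j : Fin 3) : fderiv ℝ u x w j = dot3 w (grad3 (fun y => u y j) x) := by
  rw [← fderiv_apply_eq_dot3_grad3, fderiv_apply hu]
  rfl

theorem differentiableAt_dot3 (hu : DifferentiableAt ℝ u x) (hv : DifferentiableAt ℝ v x) :
    DifferentiableAt ℝ (fun y => dot3 (u y) (v y)) x := by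
  unfold dot3
  fun_prop

theorem grad3_dot3 (hu : DifferentiableAt ℝ u x) (hv : DifferentiableAt ℝ v x) :
    grad3 (fun y => dot3 (u y) (v y)) x =
      ∑ j, (u x j • grad3 (fun y => v y j) x + v x j • grad3 (fun y => u y j) x) := by
  have hu' := differentiableAt_pi.1 hu
  have hv' := differentiableAt_pi.1 hv
  ext i
  calc pd3 i (fun y => ∑ j, u y j * v y j) x
      = ∑ j, pd3 i (fun y => u y j * v y j) x := pd3_sum (fun j _ => (hu' j).mul (hv' j)) i
    _ = ∑ j, (u x j * pd3 i (fun y => v y j) x + v x j * pd3 i (fun y => u y j) x) :=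
        Finset.sum_congr rfl fun j _ => pd3_mul (hu' j) (hv' j) i
    _ = _ := by simp only [grad3, Finset.sum_apply, Pi.add_apply, Pi.smul_apply, smul_eq_mul]

theorem grad3_dot3_const (hu : DifferentiableAt ℝ u x) (c : Fin 3 → ℝ) :
    grad3 (fun y => dot3 (u y) c) x = ∑ j, c j • grad3 (fun y => u y j) x := by
  have grad3_const (j : Fin 3) : grad3 (fun _ => c j) x = 0 := funext fun i => pd3_const i (c j) x
  simp only [grad3_dot3 hu (differentiableAt_const c), grad3_const, smul_zero, zero_add]

theorem curl3_const (c x : Fin 3 → ℝ) : curl3 (fun _ => c) x = 0 := by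
  simp [curl3, pd3_const]

theorem curl3_sub (hu : DifferentiableAt ℝ u x) (hv : DifferentiableAt ℝ v x) :
    curl3 (fun y => u y - v y) x = curl3 u x - curl3 v x := by
  have hu' := differentiableAt_pi.1 hu
  have hv' := differentiableAt_pi.1 hv
  simp only [curl3, Pi.sub_apply, pd3_sub (hu' _) (hv' _), Matrix.cons_sub_cons,
    Matrix.empty_sub_empty]
  apply Matrix.vec3_eq <;> ring

theorem curl3_smul (hf : DifferentiableAt ℝ f x) (hu : DifferentiableAt ℝ u x) :
    curl3 (fun y => f y • u y) x = f x • curl3 u x + grad3 f x ⨯₃ u x := by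
  have hu' := differentiableAt_pi.1 hu
  simp only [curl3, Pi.smul_apply, smul_eq_mul, pd3_mul hf (hu' _), cross_apply, grad3,
    Matrix.smul_vec3, Matrix.vec3_add]
  apply Matrix.vec3_eq <;> ring

theorem curl3_smul_const (hf : DifferentiableAt ℝ f x) (c : Fin 3 → ℝ) :
    curl3 (fun y => f y • c) x = grad3 f x ⨯₃ c := by
  rw [curl3_smul hf (differentiableAt_const c), curl3_const, smul_zero, zero_add]

theorem crossProduct_curl3 (hu : DifferentiableAt ℝ u x) (w : Fin 3 → ℝ) :
    w ⨯₃ curl3 u x = ∑ j, w j • grad3 (fun y => u y j) x - fderiv ℝ u x w := by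
  ext i
  simp only [Pi.sub_apply, fderiv_apply_apply_eq_dot3_grad3 hu, dot3, Fin.sum_univ_three,
    Pi.add_apply, Pi.smul_apply, smul_eq_mul, grad3, cross_apply, curl3, Matrix.cons_val]
  fin_cases i <;> simp only [Fin.zero_eta, Fin.mk_one, Fin.reduceFinMk, Matrix.cons_val] <;> ring

theorem crossProduct_curl3_eq_grad3_dot3_sub (hu : DifferentiableAt ℝ u x) (n : Fin 3 → ℝ) :
    n ⨯₃ curl3 u x = grad3 (fun y => dot3 (u y) n) x - fderiv ℝ u x n := by
  rw [crossProduct_curl3 hu, grad3_dot3_const hu]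

theorem curl3_tangProj (hu : DifferentiableAt ℝ u x) (n : Fin 3 → ℝ) :
    curl3 (fun y => tangProj n (u y)) x =
      curl3 u x - grad3 (fun y => dot3 (u y) n) x ⨯₃ n := by
  have hφ := differentiableAt_dot3 hu (differentiableAt_const n)
  simp only [tangProj, curl3_sub hu (hφ.smul_const n), curl3_smul_const hφ]

theorem dot3_curl3_tangProj (hu : DifferentiableAt ℝ u x) (n : Fin 3 → ℝ) :
    dot3 n (curl3 (fun y => tangProj n (u y)) x) = dot3 n (curl3 u x) := by
  simp only [curl3_tangProj hu, dot3_eq_dotProduct, dotProduct_sub, dot_cross_self, sub_zero]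

theorem fderiv_tangProj_apply (hu : DifferentiableAt ℝ u x) (n w : Fin 3 → ℝ) :
    fderiv ℝ (fun y => tangProj n (u y)) x w =
      fderiv ℝ u x w - fderiv ℝ (fun y => dot3 (u y) n) x w • n := by
  have hφ := differentiableAt_dot3 hu (differentiableAt_const n)
  simp only [tangProj, fderiv_fun_sub hu (hφ.smul_const n), fderiv_smul_const hφ, sub_apply,
    ContinuousLinearMap.smulRight_apply]

theorem curl_tangential_normal_identities_general (hu : DifferentiableAt ℝ u x)
    (n : Fin 3 → ℝ) :
    dot3 n (curl3 u x) = dot3 n (curl3 (fun y => tangProj n (u y)) x) ∧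
    n ⨯₃ curl3 u x =
      (grad3 (fun y => dot3 (u y) n) x - fderiv ℝ (fun y => dot3 (u y) n) x n • n) -
        fderiv ℝ (fun y => tangProj n (u y)) x n := by
  refine ⟨(dot3_curl3_tangProj hu n).symm, ?_⟩
  rw [crossProduct_curl3_eq_grad3_dot3_sub hu, fderiv_tangProj_apply hu, sub_sub_sub_cancel_right]

end VectorCalculus

/-- for a `C¹` vector field `u` on `ℝ³` and a unit vector `n`:
(i) the normal component of `curl u` depends only on the tangential part of `u`,
`n ⋅ (curl u) = n ⋅ (curl (Π ∘ u))`; and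
(ii) `n × (curl u) = ∇_f (u⋅n) − ∂_n (Π ∘ u)`, where `∇_f v = ∇v − (∂_n v) n` is the
tangential gradient and `∂_n` is the directional derivative along `n`. -/
theorem curl_tangential_normal_identities
    (u : (Fin 3 → ℝ) → (Fin 3 → ℝ)) (hu : ContDiff ℝ 1 u)
    (nvec : Fin 3 → ℝ) (hn : ∑ i, (nvec i) ^ 2 = 1) (x : Fin 3 → ℝ) :
    dot3 nvec (curl3 u x) = dot3 nvec (curl3 (fun y => tangProj nvec (u y)) x) ∧
    crossProduct nvec (curl3 u x)
      = ((fun i => pd3 i (fun y => dot3 (u y) nvec) x)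
            - (fderiv ℝ (fun y => dot3 (u y) nvec) x nvec) • nvec)
        - fderiv ℝ (fun y => tangProj nvec (u y)) x nvec :=
  curl_tangential_normal_identities_general (hu.differentiable one_ne_zero x) nvec
end
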